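/- The character of the representation π_{(ξ,η,λ)} with |λ|_p = p^n > 1 is χ(x,y,z) = p^{nd} e^{2πi{ξ·x + η·y + λz}_p} 1_{p^n Z_p^d}(x) 1_{p^n Z_p^d}(y) up to the stated normalization, and its L² norm over H_d equals 1; consequently π_{(ξ,η,λ)} is irreducible. -/

import Mathlib

noncomputable section

variable (p : ℕ) [Fact p.Prime] (d : ℕ)

def dotZ (x y : Fin d → ℤ_[p]) : ℤ_[p] := ∑ i, x i * y i

/-- The Heisenberg group `H_d(ℤ_p)`: the set `ℤ_p^{2d+1}` written as triples `(x, y, z)`. -/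
@[ext] structure Heis where
  x : Fin d → ℤ_[p]
  y : Fin d → ℤ_[p]
  z : ℤ_[p]

variable {p d}

instance : Mul (Heis p d) :=
  ⟨fun g g' => ⟨g.x + g'.x, g.y + g'.y, g.z + g'.z + dotZ p d g.x g'.y⟩⟩
instance : One (Heis p d) := ⟨⟨0, 0, 0⟩⟩
instance : Inv (Heis p d) :=
  ⟨fun g => ⟨-g.x, -g.y, -g.z + dotZ p d g.x g.y⟩⟩

lemma heis_mul_def (g g' : Heis p d) :
    g * g' = ⟨g.x + g'.x, g.y + g'.y, g.z + g'.z + dotZ p d g.x g'.y⟩ := rfl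
lemma heis_one_def : (1 : Heis p d) = ⟨0, 0, 0⟩ := rfl
lemma heis_inv_def (g : Heis p d) :
    g⁻¹ = ⟨-g.x, -g.y, -g.z + dotZ p d g.x g.y⟩ := rfl

instance heisGroup : Group (Heis p d) :=
  Group.ofLeftAxioms
    (by
      rintro ⟨a1, a2, a3⟩ ⟨b1, b2, b3⟩ ⟨c1, c2, c3⟩
      simp only [heis_mul_def, dotZ, Pi.add_apply, add_mul, mul_add,
        Finset.sum_add_distrib, Heis.mk.injEq]
      refine ⟨add_assoc _ _ _, add_assoc _ _ _, by ring⟩)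
    (by
      rintro ⟨a1, a2, a3⟩
      simp [heis_mul_def, heis_one_def, dotZ])
    (by
      rintro ⟨a1, a2, a3⟩
      simp only [heis_mul_def, heis_inv_def, heis_one_def, dotZ,
        Pi.neg_apply, Heis.mk.injEq, neg_add_cancel]
      refine ⟨trivial, trivial, by ring_nf; simp⟩)

open MeasureTheory

variable (p d)

/-- Truncation of a `p`-adic number to a `p`-adic integer (`0` if it is not an integer). -/
def padicToInt (x : ℚ_[p]) : ℤ_[p] := if h : ‖x‖ ≤ 1 then ⟨x, h⟩ else 0

/-- The `p`-adic fractional part `{x}_p`, as a rational number. -/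
def padicFract (x : ℚ_[p]) : ℚ :=
  ((padicToInt p (x * (p : ℚ_[p]) ^ (-x.valuation).toNat)).appr (-x.valuation).toNat : ℚ) /
    (p : ℚ) ^ (-x.valuation).toNat

/-- The additive character `x ↦ e^{2πi {x}_p}` of `ℚ_p`. -/
def eChar (x : ℚ_[p]) : ℂ := Complex.exp (2 * Real.pi * Complex.I * (padicFract p x : ℂ))

instance : MeasurableSpace ℤ_[p] := borel _
instance : BorelSpace ℤ_[p] := ⟨rfl⟩
instance : TopologicalSpace (Heis p d) :=
  TopologicalSpace.induced (fun g => (g.x, g.y, g.z)) inferInstance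
instance : MeasurableSpace (Heis p d) := borel _
instance : BorelSpace (Heis p d) := ⟨rfl⟩

/-- Pairing of a `ℚ_p`-covector with a `ℤ_p`-vector. -/
def dotQZ (ξ : Fin d → ℚ_[p]) (x : Fin d → ℤ_[p]) : ℚ_[p] := ∑ i, ξ i * (x i : ℚ_[p])

/-- The Schrödinger-type realization
`π_{(ξ,η,λ)}(x,y,z)φ(u) = e^{2πi{ξ·x + η·y + λ(z + u·y)}_p} φ(u + x)`. -/
def piAct (ξ η : Fin d → ℚ_[p]) (lam : ℚ_[p]) (g : Heis p d)
    (φ : (Fin d → ℤ_[p]) → ℂ) : (Fin d → ℤ_[p]) → ℂ := fun u =>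
  eChar p (dotQZ p d ξ g.x + dotQZ p d η g.y +
      lam * ((g.z : ℚ_[p]) + (dotZ p d u g.y : ℚ_[p]))) * φ (u + g.x)

/-- `φ` is invariant under translations by `p^n ℤ_p^d`. -/
def InvariantUnder (n : ℕ) (φ : (Fin d → ℤ_[p]) → ℂ) : Prop :=
  ∀ u v : Fin d → ℤ_[p], (∀ i, ‖v i‖ ≤ (p : ℝ) ^ (-(n : ℤ))) → φ (u + v) = φ u

/-- The indicator function of the coset `h + p^n ℤ_p^d`. -/
def indC (n : ℕ) (h : Fin d → ℤ_[p]) : (Fin d → ℤ_[p]) → ℂ :=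
  Set.indicator {u | ∀ i, ‖u i - h i‖ ≤ (p : ℝ) ^ (-(n : ℤ))} fun _ => (1 : ℂ)

/-- The representation space `H_λ` (span of coset indicators), `|λ|_p = p^n`. -/
def Hlam (n : ℕ) : Submodule ℂ ((Fin d → ℤ_[p]) → ℂ) :=
  Submodule.span ℂ {f | ∃ h : Fin d → ℤ_[p], f = indC p d n h}

/-- The basis vector `φ_h = |λ|_p^{d/2} 1_{h + p^n ℤ_p^d}` of `H_λ`. -/
def phiB (n : ℕ) (h : Fin d → ℤ_[p]) : (Fin d → ℤ_[p]) → ℂ := fun u =>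
  (Real.sqrt ((p : ℝ) ^ (n * d)) : ℂ) * indC p d n h u

/-- The character (trace) of `π_{(ξ,η,λ)}`, computed with respect to the orthonormal basis
`φ_h`, `h` running over representatives of `ℤ_p^d / p^n ℤ_p^d`. -/
def chiRep (ξ η : Fin d → ℚ_[p]) (lam : ℚ_[p]) (n : ℕ)
    (μ : MeasureTheory.Measure (Fin d → ℤ_[p])) (g : Heis p d) : ℂ :=
  ∑ h : Fin d → Fin (p ^ n),
    ∫ u, piAct p d ξ η lam g (phiB p d n fun i => ((h i : ℕ) : ℤ_[p])) u *
      (starRingEnd ℂ) (phiB p d n (fun i => ((h i : ℕ) : ℤ_[p])) u) ∂μ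

/-!
Since `‖λ‖ = pⁿ`, the modulation `u ↦ e(λ u·y)` is constant on the cosets of `pⁿ ℤ_pᵈ` as soon as
`y` is integral, so each diagonal matrix coefficient equals a scalar times `e(λ h·y)`, and summing
over the cosets `h` is orthogonality of characters of `(ℤ/pⁿ)ᵈ`. The character thus lives on the
kernel of `H_d → (ℤ/pⁿ)²ᵈ`, where its modulus is `pⁿᵈ`; the Haar measure of this kernel is the
inverse `p⁻²ⁿᵈ` of its index. For irreducibility, Fourier inversion along the modulations
`π(0, h, 0)` isolates the value of an invariant vector on a single coset, so a nonzero invariant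
subspace contains a coset indicator, and the translations `π(h, 0, 0)` carry it to all the others.
-/

section AdditiveCharacter

variable {p}

lemma norm_ratCast_le_one_iff_den_eq_one {q : ℚ} {k : ℕ} (hq : q.den ∣ p ^ k) :
    ‖(q : ℚ_[p])‖ ≤ 1 ↔ q.den = 1 := by
  rw [Padic.norm_rat_le_one_iff_padicValuation_le_one, Rat.padicValuation_le_one_iff]
  refine ⟨fun hndvd => ?_, fun hden => ?_⟩
  · exact Nat.Coprime.eq_one_of_dvd
      ((((Fact.out : p.Prime).coprime_iff_not_dvd.2 hndvd).symm).pow_right k) hq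
  · rw [hden]
    exact (Fact.out : p.Prime).not_dvd_one

lemma exp_two_pi_I_mul_ratCast_eq_one_iff (q : ℚ) :
    Complex.exp (2 * Real.pi * Complex.I * q) = 1 ↔ q.den = 1 := by
  rw [Complex.exp_eq_one_iff, Rat.den_eq_one_iff]
  refine ⟨fun ⟨m, hm⟩ => ?_, fun hq => ⟨q.num, ?_⟩⟩
  · rw [mul_comm, mul_left_inj' Complex.two_pi_I_ne_zero] at hm
    have : q = m := by exact_mod_cast hm
    simp [this]
  · rw [mul_comm, ← hq]
    simp

lemma exists_den_padicFract_dvd_pow (x : ℚ_[p]) : ∃ k, (padicFract p x).den ∣ p ^ k := by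
  refine ⟨(-x.valuation).toNat, ?_⟩
  unfold padicFract
  generalize PadicInt.appr (p := p) _ _ = a
  generalize (-x.valuation).toNat = k
  have hdvd := Rat.den_dvd a (p ^ k : ℕ)
  rwa [Rat.divInt_eq_div, Int.natCast_dvd_natCast, Int.cast_natCast, Int.cast_natCast,
    Nat.cast_pow] at hdvd

lemma norm_mul_pow_neg_valuation_le_one (x : ℚ_[p]) :
    ‖x * (p : ℚ_[p]) ^ (-x.valuation).toNat‖ ≤ 1 := by
  rcases eq_or_ne x 0 with rfl | hx
  · simp
  have hp : (p : ℚ_[p]) ≠ 0 := by exact_mod_cast (Fact.out : p.Prime).ne_zero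
  rw [Padic.norm_le_one_iff_val_nonneg, Padic.valuation_mul hx (pow_ne_zero _ hp),
    Padic.valuation_pow, Padic.valuation_p]
  omega

lemma norm_sub_padicFract_le_one (x : ℚ_[p]) : ‖x - padicFract p x‖ ≤ 1 := by
  have hp : (p : ℚ_[p]) ≠ 0 := by exact_mod_cast (Fact.out : p.Prime).ne_zero
  have hint := norm_mul_pow_neg_valuation_le_one x
  have htrunc : padicToInt p (x * (p : ℚ_[p]) ^ (-x.valuation).toNat) = ⟨_, hint⟩ := dif_pos hint
  rw [padicFract, htrunc]
  generalize (-x.valuation).toNat = k at hint ⊢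
  have happr := PadicInt.appr_spec k ⟨x * (p : ℚ_[p]) ^ k, hint⟩
  generalize PadicInt.appr ⟨x * (p : ℚ_[p]) ^ k, hint⟩ k = a at happr ⊢
  obtain ⟨c, hc⟩ := Ideal.mem_span_singleton.1 happr
  have hc : x * p ^ k - a = p ^ k * c := by exact_mod_cast congrArg Subtype.val hc
  have : x - ((a / p ^ k : ℚ) : ℚ_[p]) = c := by
    push_cast
    field_simp
    linear_combination hc
  exact this ▸ c.norm_le_one

lemma eChar_eq_one_iff (x : ℚ_[p]) : eChar p x = 1 ↔ ‖x‖ ≤ 1 := by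
  obtain ⟨k, hk⟩ := exists_den_padicFract_dvd_pow x
  rw [eChar, exp_two_pi_I_mul_ratCast_eq_one_iff, ← norm_ratCast_le_one_iff_den_eq_one hk]
  simp only [← PadicInt.mem_subring_iff]
  have hsub : x - padicFract p x ∈ PadicInt.subring p := norm_sub_padicFract_le_one x
  rw [← add_mem_cancel_left hsub, sub_add_cancel]

lemma eChar_add (x y : ℚ_[p]) : eChar p (x + y) = eChar p x * eChar p y := by
  let q : ℚ := padicFract p (x + y) - (padicFract p x + padicFract p y)
  obtain ⟨k, hk⟩ := exists_den_padicFract_dvd_pow (x + y)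
  obtain ⟨l, hl⟩ := exists_den_padicFract_dvd_pow x
  obtain ⟨m, hm⟩ := exists_den_padicFract_dvd_pow y
  have hden : q.den ∣ p ^ (k + (l + m)) := by
    rw [pow_add, pow_add]
    exact (Rat.sub_den_dvd _ _).trans
      (mul_dvd_mul hk ((Rat.add_den_dvd _ _).trans (mul_dvd_mul hl hm)))
  have hnorm : ‖(q : ℚ_[p])‖ ≤ 1 := by
    have hq : (q : ℚ_[p]) =
        (x - padicFract p x) + (y - padicFract p y) - (x + y - padicFract p (x + y)) := by
      push_cast [q]
      ring
    rw [hq, ← PadicInt.mem_subring_iff]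
    exact sub_mem (add_mem (norm_sub_padicFract_le_one x) (norm_sub_padicFract_le_one y))
      (norm_sub_padicFract_le_one (x + y))
  have hexp : Complex.exp (2 * Real.pi * Complex.I * q) = 1 := by
    rwa [exp_two_pi_I_mul_ratCast_eq_one_iff, ← norm_ratCast_le_one_iff_den_eq_one hden]
  rw [eChar, eChar, eChar, ← Complex.exp_add, ← mul_one (Complex.exp (_ + _)), ← hexp,
    ← Complex.exp_add]
  push_cast [q]
  ring_nf

variable (p) in
/-- The standard additive character `x ↦ e^{2πi {x}_p}` of `ℚ_p`, bundled so as to make the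
`AddChar` API available. -/
def eAddChar : AddChar ℚ_[p] ℂ where
  toFun := eChar p
  map_zero_eq_one' := (eChar_eq_one_iff 0).2 (by simp)
  map_add_eq_mul' := eChar_add

lemma eAddChar_apply (x : ℚ_[p]) : eAddChar p x = eChar p x := rfl

lemma addChar_map_sum {A M ι : Type*} [AddCommMonoid A] [CommMonoid M] (ψ : AddChar A M)
    (s : Finset ι) (f : ι → A) : ψ (∑ i ∈ s, f i) = ∏ i ∈ s, ψ (f i) :=
  map_prod ψ.toMonoidHom (fun i => Multiplicative.ofAdd (f i)) s

lemma eChar_ne_zero (x : ℚ_[p]) : eChar p x ≠ 0 := Complex.exp_ne_zero _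

lemma norm_eChar (x : ℚ_[p]) : ‖eChar p x‖ = 1 := by
  simp [eChar, Complex.norm_exp]

end AdditiveCharacter

section Residue

variable {p d} {n : ℕ}

lemma norm_le_zpow_neg_iff_toZModPow_eq_zero (x : ℤ_[p]) :
    ‖x‖ ≤ (p : ℝ) ^ (-(n : ℤ)) ↔ PadicInt.toZModPow n x = 0 := by
  rw [PadicInt.norm_le_pow_iff_mem_span_pow, ← PadicInt.ker_toZModPow, RingHom.mem_ker]

variable (p d n) in
/-- Reduction modulo `p^n` on `ℤ_p^d`, whose kernel is `p^n ℤ_p^d`. -/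
def residue : (Fin d → ℤ_[p]) →+* (Fin d → ZMod (p ^ n)) :=
  (PadicInt.toZModPow n).compLeft (Fin d)

lemma residue_apply (u : Fin d → ℤ_[p]) (i : Fin d) :
    residue p d n u i = PadicInt.toZModPow n (u i) := rfl

lemma residue_surjective : Function.Surjective (residue p d n) :=
  (ZMod.ringHom_surjective (PadicInt.toZModPow n)).comp_left

lemma indC_eq_ite (h u : Fin d → ℤ_[p]) :
    indC p d n h u = if residue p d n u = residue p d n h then 1 else 0 := by
  simp only [indC, Set.indicator_apply, Set.mem_ofPred_eq, norm_le_zpow_neg_iff_toZModPow_eq_zero,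
    map_sub, sub_eq_zero, funext_iff, residue_apply]

lemma indC_zero_sub (h u : Fin d → ℤ_[p]) : indC p d n 0 (u - h) = indC p d n h u := by
  simp [indC_eq_ite, sub_eq_zero]

lemma indC_zero_eq_indicator_ker :
    indC p d n 0 =
      Set.indicator ((residue p d n).toAddMonoidHom.ker : Set (Fin d → ℤ_[p])) fun _ => 1 := by
  classical
  ext u
  simp [indC_eq_ite, Set.indicator_apply]

lemma isClosed_ker_residue :
    IsClosed ((residue p d n).toAddMonoidHom.ker : Set (Fin d → ℤ_[p])) := by
  have : ((residue p d n).toAddMonoidHom.ker : Set (Fin d → ℤ_[p])) =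
      ⋂ i, {u | ‖u i‖ ≤ (p : ℝ) ^ (-(n : ℤ))} := by
    ext u
    simp only [Set.mem_iInter, Set.mem_ofPred_eq, norm_le_zpow_neg_iff_toZModPow_eq_zero]
    exact funext_iff
  rw [this]
  exact isClosed_iInter fun i => isClosed_le (by fun_prop) continuous_const

lemma dotZ_comm (u v : Fin d → ℤ_[p]) : dotZ p d u v = dotZ p d v u := dotProduct_comm u v

lemma dotZ_sub_left (u v w : Fin d → ℤ_[p]) :
    dotZ p d (u - v) w = dotZ p d u w - dotZ p d v w := sub_dotProduct u v w

lemma toZModPow_dotZ (u v : Fin d → ℤ_[p]) :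
    PadicInt.toZModPow n (dotZ p d u v) = residue p d n u ⬝ᵥ residue p d n v := by
  simp [dotZ, dotProduct, residue_apply]

end Residue

section Orthogonality

variable {p d} {lam : ℚ_[p]} {n : ℕ}

lemma eChar_mul_eq_one_iff (hlam : ‖lam‖ = (p : ℝ) ^ (n : ℤ)) (x : ℤ_[p]) :
    eChar p (lam * x) = 1 ↔ PadicInt.toZModPow n x = 0 := by
  have hp : (0 : ℝ) < p := by exact_mod_cast (Fact.out : p.Prime).pos
  rw [eChar_eq_one_iff, norm_mul, hlam, ← PadicInt.norm_def,
    ← norm_le_zpow_neg_iff_toZModPow_eq_zero, zpow_neg, ← one_div, le_div_iff₀' (by positivity)]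

lemma eChar_mul_dotZ_congr (hlam : ‖lam‖ = (p : ℝ) ^ (n : ℤ)) {u v : Fin d → ℤ_[p]}
    (huv : residue p d n u = residue p d n v) (y : Fin d → ℤ_[p]) :
    eChar p (lam * dotZ p d u y) = eChar p (lam * dotZ p d v y) := by
  have hone : eChar p (lam * dotZ p d (u - v) y) = 1 := by
    rw [eChar_mul_eq_one_iff hlam, toZModPow_dotZ, map_sub, huv, sub_self, zero_dotProduct]
  rw [← one_mul (eChar p (lam * dotZ p d v y)), ← hone, ← eChar_add, ← mul_add,
    ← PadicInt.coe_add, dotZ_sub_left, sub_add_cancel]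

lemma sum_fin_pow_eq_ite {K : Type*} [Field K] [DecidableEq K] {ζ : K} {N : ℕ} (hζ : ζ ^ N = 1) :
    ∑ k : Fin N, ζ ^ (k : ℕ) = if ζ = 1 then (N : K) else 0 := by
  split_ifs with h
  · simp [h]
  · rw [Fin.sum_univ_eq_sum_range (ζ ^ ·), geom_sum_eq h, hζ, sub_self, zero_div]

/-- The representative of a class of `ℤ_p^d / p^n ℤ_p^d` with coordinates in `{0, …, p^n - 1}`. -/
def natVec (h : Fin d → Fin (p ^ n)) : Fin d → ℤ_[p] := fun i => ((h i : ℕ) : ℤ_[p])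

lemma eChar_mul_dotZ_natVec (lam : ℚ_[p]) (w : Fin d → ℤ_[p]) (h : Fin d → Fin (p ^ n)) :
    eChar p (lam * dotZ p d w (natVec h)) = ∏ i, eChar p (lam * w i) ^ (h i : ℕ) := by
  have hsum : lam * dotZ p d w (natVec h) = ∑ i, (h i : ℕ) • (lam * w i) := by
    simp only [dotZ, natVec, PadicInt.coe_sum, PadicInt.coe_mul, PadicInt.coe_natCast,
      Finset.mul_sum, nsmul_eq_mul]
    exact Finset.sum_congr rfl fun i _ => by ring
  simp only [hsum, ← eAddChar_apply, addChar_map_sum, AddChar.map_nsmul_eq_pow]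

lemma sum_eChar_mul_dotZ_natVec (hlam : ‖lam‖ = (p : ℝ) ^ (n : ℤ)) (w : Fin d → ℤ_[p]) :
    ∑ h : Fin d → Fin (p ^ n), eChar p (lam * dotZ p d w (natVec h)) =
      (p : ℂ) ^ (n * d) * indC p d n 0 w := by
  classical
  have hroot (i : Fin d) : eChar p (lam * w i) ^ p ^ n = 1 := by
    rw [← eAddChar_apply, ← AddChar.map_nsmul_eq_pow, eAddChar_apply, nsmul_eq_mul,
      mul_left_comm, ← PadicInt.coe_natCast, ← PadicInt.coe_mul, eChar_mul_eq_one_iff hlam,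
      map_mul, map_natCast, ZMod.natCast_self, zero_mul]
  calc ∑ h : Fin d → Fin (p ^ n), eChar p (lam * dotZ p d w (natVec h))
      = ∏ i, ∑ k : Fin (p ^ n), eChar p (lam * w i) ^ (k : ℕ) := by
        simp only [eChar_mul_dotZ_natVec, Fintype.prod_sum]
    _ = ∏ i, if PadicInt.toZModPow n (w i) = 0 then ((p ^ n : ℕ) : ℂ) else 0 := by
        simp only [sum_fin_pow_eq_ite (hroot _), eChar_mul_eq_one_iff hlam]
    _ = (p : ℂ) ^ (n * d) * indC p d n 0 w := by
        simp [Fintype.prod_ite_zero, indC_eq_ite, funext_iff, residue_apply, pow_mul]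

end Orthogonality

section HaarMeasure

@[to_additive]
lemma measureReal_monoidHom_ker {G Q : Type*} [Group G] [MeasurableSpace G] [MeasurableMul G]
    [Group Q] [Finite Q] (μ : Measure G) [IsProbabilityMeasure μ] [μ.IsMulLeftInvariant]
    {φ : G →* Q} (hφ : Function.Surjective φ) (hker : MeasurableSet (φ.ker : Set G)) :
    μ.real φ.ker = (Nat.card Q : ℝ)⁻¹ := by
  have hindex : φ.ker.index = Nat.card Q := by
    rw [Subgroup.index_ker, MonoidHom.range_eq_top.2 hφ, Subgroup.card_top]
  have hmul : (Nat.card Q : ENNReal) * μ φ.ker = 1 := by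
    rw [← hindex, φ.ker.index_mul_measure hker, measure_univ]
  refine eq_inv_of_mul_eq_one_right ?_
  simpa [Measure.real] using congrArg ENNReal.toReal hmul

variable {p d}

lemma integral_indC (μ : Measure (Fin d → ℤ_[p])) [IsProbabilityMeasure μ]
    [μ.IsAddLeftInvariant] (n : ℕ) (h : Fin d → ℤ_[p]) :
    ∫ u, indC p d n h u ∂μ = ((p : ℂ) ^ (n * d))⁻¹ := by
  have : NeZero (p ^ n) := ⟨pow_ne_zero _ (Fact.out : p.Prime).ne_zero⟩
  have hker := (isClosed_ker_residue (p := p) (d := d) (n := n)).measurableSet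
  simp only [← indC_zero_sub h]
  rw [integral_sub_right_eq_self (indC p d n 0), indC_zero_eq_indicator_ker,
    integral_indicator_const _ hker, measureReal_addMonoidHom_ker μ residue_surjective hker]
  simp [pow_mul]

lemma continuous_heis_coords : Continuous fun g : Heis p d => (g.x, g.y, g.z) :=
  continuous_induced_dom

lemma continuous_heis_x : Continuous fun g : Heis p d => g.x :=
  continuous_heis_coords.fst

lemma continuous_heis_y : Continuous fun g : Heis p d => g.y :=
  continuous_heis_coords.snd.fst

lemma continuous_heis_z : Continuous fun g : Heis p d => g.z :=
  continuous_heis_coords.snd.snd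

instance : ContinuousMul (Heis p d) where
  continuous_mul := by
    have hx := continuous_heis_x (p := p) (d := d)
    have hy := continuous_heis_y (p := p) (d := d)
    have hz := continuous_heis_z (p := p) (d := d)
    refine continuous_induced_rng.2 ?_
    simp only [Function.comp_def, heis_mul_def, dotZ]
    fun_prop

/-- The quotient map of `H_d` onto the group `(ℤ/p^n)^{2d}` that forgets the centre and reduces
`x` and `y` modulo `p^n`; the character of `π_{(ξ,η,λ)}` is supported on its kernel. -/
def heisResidue (p : ℕ) [Fact p.Prime] (d n : ℕ) :
    Heis p d →* Multiplicative ((Fin d → ZMod (p ^ n)) × (Fin d → ZMod (p ^ n))) where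
  toFun g := .ofAdd (residue p d n g.x, residue p d n g.y)
  map_one' := by simp [heis_one_def]
  map_mul' g g' := by simp [heis_mul_def, ← ofAdd_add]

lemma heisResidue_surjective (n : ℕ) : Function.Surjective (heisResidue p d n) := fun r => by
  obtain ⟨x, hx⟩ := residue_surjective r.toAdd.1
  obtain ⟨y, hy⟩ := residue_surjective r.toAdd.2
  exact ⟨⟨x, y, 0⟩, congrArg₂ (fun a b => Multiplicative.ofAdd (a, b)) hx hy⟩

lemma mem_ker_heisResidue {n : ℕ} {g : Heis p d} :
    g ∈ (heisResidue p d n).ker ↔ residue p d n g.x = 0 ∧ residue p d n g.y = 0 :=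
  Prod.mk_eq_zero

lemma measurableSet_ker_heisResidue (n : ℕ) :
    MeasurableSet ((heisResidue p d n).ker : Set (Heis p d)) := by
  have : ((heisResidue p d n).ker : Set (Heis p d)) =
      Heis.x ⁻¹' (residue p d n).toAddMonoidHom.ker ∩
        Heis.y ⁻¹' (residue p d n).toAddMonoidHom.ker :=
    Set.ext fun _ => mem_ker_heisResidue
  rw [this]
  exact ((isClosed_ker_residue.preimage continuous_heis_x).inter
    (isClosed_ker_residue.preimage continuous_heis_y)).measurableSet

lemma measureReal_ker_heisResidue (μH : Measure (Heis p d)) [IsProbabilityMeasure μH]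
    [μH.IsMulLeftInvariant] (n : ℕ) :
    μH.real (heisResidue p d n).ker = (((p : ℝ) ^ (n * d)) ^ 2)⁻¹ := by
  have : NeZero (p ^ n) := ⟨pow_ne_zero _ (Fact.out : p.Prime).ne_zero⟩
  rw [measureReal_monoidHom_ker μH (heisResidue_surjective n) (measurableSet_ker_heisResidue n)]
  simp [pow_mul, sq]

end HaarMeasure

section Character

variable {p d} {lam : ℚ_[p]} {n : ℕ} (ξ η : Fin d → ℚ_[p])

lemma piAct_phiB_mul_conj_phiB (hlam : ‖lam‖ = (p : ℝ) ^ (n : ℤ)) (g : Heis p d)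
    (h u : Fin d → ℤ_[p]) :
    piAct p d ξ η lam g (phiB p d n h) u * (starRingEnd ℂ) (phiB p d n h u) =
      (p : ℂ) ^ (n * d) * eChar p (dotQZ p d ξ g.x + dotQZ p d η g.y + lam * g.z) *
        indC p d n 0 g.x * eChar p (lam * dotZ p d g.y h) * indC p d n h u := by
  by_cases hu : residue p d n u = residue p d n h
  · have hsqrt : (Real.sqrt ((p : ℝ) ^ (n * d)) : ℂ) * Real.sqrt ((p : ℝ) ^ (n * d)) =
        (p : ℂ) ^ (n * d) := by
      rw [← Complex.ofReal_mul, Real.mul_self_sqrt (by positivity)]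
      push_cast
      rfl
    have hx : indC p d n h (u + g.x) = indC p d n 0 g.x := by simp [indC_eq_ite, hu]
    have hself : indC p d n h u = 1 := by simp [indC_eq_ite, hu]
    simp only [piAct, phiB, hx, hself, mul_one, Complex.conj_ofReal]
    rw [mul_add, ← add_assoc, eChar_add, eChar_mul_dotZ_congr hlam hu, dotZ_comm h, ← hsqrt]
    ring
  · simp [phiB, indC_eq_ite, hu]

lemma integral_piAct_phiB_mul_conj_phiB (hlam : ‖lam‖ = (p : ℝ) ^ (n : ℤ))
    (μ : Measure (Fin d → ℤ_[p])) [IsProbabilityMeasure μ] [μ.IsAddLeftInvariant] (g : Heis p d)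
    (h : Fin d → ℤ_[p]) :
    ∫ u, piAct p d ξ η lam g (phiB p d n h) u * (starRingEnd ℂ) (phiB p d n h u) ∂μ =
      eChar p (dotQZ p d ξ g.x + dotQZ p d η g.y + lam * g.z) * indC p d n 0 g.x *
        eChar p (lam * dotZ p d g.y h) := by
  have hp : (p : ℂ) ≠ 0 := by exact_mod_cast (Fact.out : p.Prime).ne_zero
  simp only [piAct_phiB_mul_conj_phiB ξ η hlam]
  rw [integral_const_mul, integral_indC]
  field_simp

theorem chiRep_eq (hlam : ‖lam‖ = (p : ℝ) ^ (n : ℤ)) (μ : Measure (Fin d → ℤ_[p]))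
    [IsProbabilityMeasure μ] [μ.IsAddLeftInvariant] (g : Heis p d) :
    chiRep p d ξ η lam n μ g =
      (p : ℂ) ^ (n * d) * eChar p (dotQZ p d ξ g.x + dotQZ p d η g.y + lam * g.z) *
        indC p d n 0 g.x * indC p d n 0 g.y := by
  calc chiRep p d ξ η lam n μ g
      = ∑ h : Fin d → Fin (p ^ n),
          eChar p (dotQZ p d ξ g.x + dotQZ p d η g.y + lam * g.z) * indC p d n 0 g.x *
            eChar p (lam * dotZ p d g.y (natVec h)) :=
        Finset.sum_congr rfl fun h _ =>
          integral_piAct_phiB_mul_conj_phiB ξ η hlam μ g (natVec h)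
    _ = _ := by
        rw [← Finset.mul_sum, sum_eChar_mul_dotZ_natVec hlam]
        ring

lemma norm_chiRep_sq_eq_indicator (hlam : ‖lam‖ = (p : ℝ) ^ (n : ℤ))
    (μ : Measure (Fin d → ℤ_[p])) [IsProbabilityMeasure μ] [μ.IsAddLeftInvariant]
    (g : Heis p d) :
    ‖chiRep p d ξ η lam n μ g‖ ^ 2 =
      Set.indicator ((heisResidue p d n).ker : Set (Heis p d))
        (fun _ => ((p : ℝ) ^ (n * d)) ^ 2) g := by
  classical
  rw [chiRep_eq ξ η hlam, Set.indicator_apply]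
  simp only [SetLike.mem_coe, mem_ker_heisResidue]
  by_cases hx : residue p d n g.x = 0 <;> by_cases hy : residue p d n g.y = 0 <;>
    simp [indC_eq_ite, norm_eChar, hx, hy]

theorem integral_norm_chiRep_sq (hlam : ‖lam‖ = (p : ℝ) ^ (n : ℤ))
    (μ : Measure (Fin d → ℤ_[p])) [IsProbabilityMeasure μ] [μ.IsAddLeftInvariant]
    (μH : Measure (Heis p d)) [IsProbabilityMeasure μH] [μH.IsMulLeftInvariant] :
    ∫ g, ‖chiRep p d ξ η lam n μ g‖ ^ 2 ∂μH = 1 := by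
  have hp : (p : ℝ) ≠ 0 := by exact_mod_cast (Fact.out : p.Prime).ne_zero
  simp only [norm_chiRep_sq_eq_indicator ξ η hlam]
  rw [integral_indicator_const _ (measurableSet_ker_heisResidue n), measureReal_ker_heisResidue,
    smul_eq_mul, inv_mul_cancel₀ (by positivity)]

end Character

section Irreducibility

variable {p d} {ξ η : Fin d → ℚ_[p]} {lam : ℚ_[p]} {n : ℕ}

lemma apply_eq_of_mem_Hlam {f : (Fin d → ℤ_[p]) → ℂ} (hf : f ∈ Hlam p d n)
    {u v : Fin d → ℤ_[p]} (huv : residue p d n u = residue p d n v) : f u = f v := by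
  induction hf using Submodule.span_induction with
  | mem f hf =>
    obtain ⟨h, rfl⟩ := hf
    rw [indC_eq_ite, indC_eq_ite, huv]
  | zero => rfl
  | add f g _ _ hf hg => rw [Pi.add_apply, Pi.add_apply, hf, hg]
  | smul c f _ hf => rw [Pi.smul_apply, Pi.smul_apply, hf]

lemma indC_mul_apply {f : (Fin d → ℤ_[p]) → ℂ} (hf : f ∈ Hlam p d n) (h u : Fin d → ℤ_[p]) :
    indC p d n h u * f u = indC p d n h u * f h := by
  by_cases hu : residue p d n u = residue p d n h
  · rw [apply_eq_of_mem_Hlam hf hu]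
  · simp [indC_eq_ite, hu]

lemma piAct_modulation (y : Fin d → ℤ_[p]) (f : (Fin d → ℤ_[p]) → ℂ) (u : Fin d → ℤ_[p]) :
    piAct p d ξ η lam ⟨0, y, 0⟩ f u = eChar p (dotQZ p d η y + lam * dotZ p d u y) * f u := by
  simp [piAct, dotQZ]

lemma piAct_translation (x : Fin d → ℤ_[p]) (f : (Fin d → ℤ_[p]) → ℂ) (u : Fin d → ℤ_[p]) :
    piAct p d ξ η lam ⟨x, 0, 0⟩ f u = eChar p (dotQZ p d ξ x) * f (u + x) := by
  simp [piAct, dotQZ, dotZ]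

lemma sum_smul_piAct_modulation (hlam : ‖lam‖ = (p : ℝ) ^ (n : ℤ))
    {f : (Fin d → ℤ_[p]) → ℂ} (hf : f ∈ Hlam p d n) (v : Fin d → ℤ_[p]) :
    ∑ h : Fin d → Fin (p ^ n), eChar p (-(dotQZ p d η (natVec h) + lam * dotZ p d v (natVec h))) •
        piAct p d ξ η lam ⟨0, natVec h, 0⟩ f =
      ((p : ℂ) ^ (n * d) * f v) • indC p d n v := by
  ext u
  calc _ = (∑ h : Fin d → Fin (p ^ n), eChar p (lam * dotZ p d (u - v) (natVec h))) * f u := by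
        simp only [Finset.sum_apply, Pi.smul_apply, smul_eq_mul, piAct_modulation,
          ← mul_assoc, ← eChar_add, Finset.sum_mul, dotZ_sub_left, PadicInt.coe_sub]
        exact Finset.sum_congr rfl fun h _ => by ring_nf
    _ = _ := by
        rw [sum_eChar_mul_dotZ_natVec hlam, indC_zero_sub, mul_assoc, indC_mul_apply hf,
          Pi.smul_apply, smul_eq_mul]
        ring

lemma piAct_translation_indC (h v : Fin d → ℤ_[p]) :
    piAct p d ξ η lam ⟨v - h, 0, 0⟩ (indC p d n v) =
      eChar p (dotQZ p d ξ (v - h)) • indC p d n h := by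
  ext u
  rw [piAct_translation, Pi.smul_apply, smul_eq_mul, ← indC_zero_sub v, ← indC_zero_sub h]
  congr 2
  abel

theorem eq_bot_or_eq_Hlam_of_piAct_mem (hlam : ‖lam‖ = (p : ℝ) ^ (n : ℤ))
    {W : Submodule ℂ ((Fin d → ℤ_[p]) → ℂ)} (hWle : W ≤ Hlam p d n)
    (hW : ∀ g : Heis p d, ∀ f ∈ W, piAct p d ξ η lam g f ∈ W) :
    W = ⊥ ∨ W = Hlam p d n := by
  refine or_iff_not_imp_left.2 fun hbot => le_antisymm hWle ?_
  obtain ⟨f, hf, hne⟩ := W.exists_mem_ne_zero_of_ne_bot hbot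
  obtain ⟨v, hv⟩ : ∃ v, f v ≠ 0 := Function.ne_iff.1 hne
  have hp : (p : ℂ) ≠ 0 := by exact_mod_cast (Fact.out : p.Prime).ne_zero
  have hind : indC p d n v ∈ W := by
    rw [← W.smul_mem_iff (mul_ne_zero (pow_ne_zero (n * d) hp) hv),
      ← sum_smul_piAct_modulation (ξ := ξ) (η := η) hlam (hWle hf)]
    exact W.sum_mem fun h _ => W.smul_mem _ (hW _ f hf)
  refine Submodule.span_le.2 ?_
  rintro _ ⟨h, rfl⟩
  rw [SetLike.mem_coe, ← W.smul_mem_iff (eChar_ne_zero (dotQZ p d ξ (v - h))),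
    ← piAct_translation_indC (η := η) (lam := lam)]
  exact hW _ _ hind

end Irreducibility

/-- The character of `π_{(ξ,η,λ)}` (`|λ|_p = p^n > 1`) equals
`p^{nd} e^{2πi{ξ·x + η·y + λz}_p} 1_{p^n ℤ_p^d}(x) 1_{p^n ℤ_p^d}(y)`, its `L²`-norm over
`H_d` equals `1`, and consequently `π_{(ξ,η,λ)}` is irreducible. -/
theorem character_formula_norm_and_irreducible (ξ η : Fin d → ℚ_[p]) (lam : ℚ_[p]) (n : ℕ)
    (hn : 0 < n) (hlam : ‖lam‖ = (p : ℝ) ^ (n : ℤ))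
    (μ : MeasureTheory.Measure (Fin d → ℤ_[p]))
    (hinv : ∀ v, μ.map (· + v) = μ) (hprob : μ Set.univ = 1)
    (μH : MeasureTheory.Measure (Heis p d))
    (hinvH : ∀ g₀ : Heis p d, μH.map (g₀ * ·) = μH) (hprobH : μH Set.univ = 1) :
    (∀ g : Heis p d, chiRep p d ξ η lam n μ g =
        (p : ℂ) ^ (n * d) * eChar p (dotQZ p d ξ g.x + dotQZ p d η g.y + lam * (g.z : ℚ_[p])) *
          indC p d n 0 g.x * indC p d n 0 g.y) ∧
    (∫ g, ‖chiRep p d ξ η lam n μ g‖ ^ 2 ∂μH) = 1 ∧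
    (∀ W : Submodule ℂ ((Fin d → ℤ_[p]) → ℂ), W ≤ Hlam p d n →
      (∀ (g : Heis p d), ∀ f ∈ W, piAct p d ξ η lam g f ∈ W) →
      W = ⊥ ∨ W = Hlam p d n) := by
  have : IsProbabilityMeasure μ := ⟨hprob⟩
  have : μ.IsAddLeftInvariant := ⟨fun v => by simpa only [add_comm] using hinv v⟩
  have : IsProbabilityMeasure μH := ⟨hprobH⟩
  have : μH.IsMulLeftInvariant := ⟨hinvH⟩
  exact ⟨chiRep_eq ξ η hlam μ, integral_norm_chiRep_sq ξ η hlam μ μH,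
    fun _ hWle hW => eq_bot_or_eq_Hlam_of_piAct_mem hlam hWle hW⟩
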